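/- arXiv:2301.02878 — 4 statements merged into one kernel-verified Lean document; each statement's English description precedes it below -/
import Mathlib

section
/- Let d ≥ 2, let n ≥ 2, let a_0 ≤ a_1 ≤ ⋯ ≤ a_{n−1} be nonnegative reals, and let k satisfy 2 ≤ k ≤ d and k ≡ n (mod d−1). Then there exist a finite prefix code C over Fin d, a bijection g : Fin n → C with labeling r = (a ∘ g⁻¹) : C → ℝ≥0 (so the multiset of labels of (C, r) is {a_0, …, a_{n−1}}), and a word u over Fin d such that: (1) (C, r) is α-optimal, i.e., for every finite prefix code D over Fin d with labeling s : D → ℝ≥0 for which there exists a bijection f : C → D with r = s ∘ f, one has α(C, r) ≤ α(D, s); (2) for each i < k, the word u ++ [i] belongs to C, r(u ++ [i]) = a_i, and |u ++ [i]| is the maximum length of any codeword in C; (3) every element of C having u as a prefix is of the form u ++ [i] for some i < k. -/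
/-!
The proof reduces the statement to arithmetic of codeword lengths through Kraft's inequality.

A family of lengths `ℓ : Fin n → ℕ` is realised by a prefix code exactly when
`∑ d ^ (L - ℓ i) ≤ d ^ L`, for `L` any bound on the lengths (`kraft_le` and `exists_of_kraft`).
By Dickson's lemma there is a realisable `ℓ` minimising, lexicographically, the pair
`(∑ ℓ i * a i, ∑ (i + 1) * ℓ i)` (`exists_minimal_lengths`). The first coordinate is the cost `α`.
The second one breaks ties: since `a` is increasing, exchanging two lengths in the wrong order would
decrease the pair, so `ℓ` is antitone; and lengths cannot be shortened for free.

Let `L = ℓ 0` be the maximal length and `S = d ^ L - ∑ d ^ (L - ℓ i)` the slack. Shortening `ℓ 0`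
by one would use `d - 1` units of slack, so `S ≤ d - 2`. Modulo `d - 1` one finds `S ≡ 1 - n ≡ 1 - k`,
hence `S = d - k`. Modulo `d`, the number of `i` with `ℓ i = L` is congruent to `-S ≡ k`, and it is
positive, so it is at least `k`; thus `ℓ i = L` for all `i < k`. Replacing these `k` words by a
single word of length `L - 1` changes the Kraft sum by `d - k = S`, so it is still admissible.
A prefix code for the merged lengths, in which the merged word `u` is replaced by the words
`u ++ [i]` with `i < k`, is the required code.
-/

open scoped NNReal

/-- A prefix code over the alphabet `Fin d`: a set of words whose elements are
pairwise incomparable under the prefix relation. -/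
def IsPrefixCode {d : ℕ} (C : Set (List (Fin d))) : Prop :=
  ∀ x ∈ C, ∀ y ∈ C, x <+: y → x = y

/-! ### Kraft's inequality and its converse -/

/-- The finset of all words of length `m` over `Fin d`. -/
def wordsOfLength (d m : ℕ) : Finset (List (Fin d)) :=
  (Finset.univ : Finset (Fin m → Fin d)).image List.ofFn

lemma mem_wordsOfLength {d m : ℕ} {w : List (Fin d)} :
    w ∈ wordsOfLength d m ↔ w.length = m := by
  simp only [wordsOfLength, Finset.mem_image, Finset.mem_univ, true_and]
  constructor
  · rintro ⟨f, rfl⟩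
    simp
  · rintro rfl
    exact ⟨w.get, List.ofFn_get w⟩

lemma card_wordsOfLength (d m : ℕ) : (wordsOfLength d m).card = d ^ m := by
  rw [wordsOfLength, Finset.card_image_of_injective _ List.ofFn_injective]
  simp

/-- The finset of all words of length `L` with prefix `x`, provided that `x.length ≤ L`. -/
def extensions {d : ℕ} (L : ℕ) (x : List (Fin d)) : Finset (List (Fin d)) :=
  (wordsOfLength d (L - x.length)).image (x ++ ·)

lemma mem_extensions {d L : ℕ} {x w : List (Fin d)} (hx : x.length ≤ L) :
    w ∈ extensions L x ↔ w.length = L ∧ x <+: w := by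
  simp only [extensions, Finset.mem_image, mem_wordsOfLength]
  constructor
  · rintro ⟨y, hy, rfl⟩
    refine ⟨?_, List.prefix_append _ _⟩
    rw [List.length_append]
    omega
  · rintro ⟨hw, y, rfl⟩
    refine ⟨y, ?_, rfl⟩
    rw [List.length_append] at hw
    omega

lemma card_extensions {d : ℕ} (L : ℕ) (x : List (Fin d)) :
    (extensions L x).card = d ^ (L - x.length) := by
  rw [extensions, Finset.card_image_of_injective _ (List.append_right_injective x),
    card_wordsOfLength]

/-- `ℓ` is the family of codeword lengths of a prefix code over `Fin d`. The condition
`g i <+: g j → i = j` says that `g` is injective and that its range is a prefix code. -/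
def IsCodeLengths (d : ℕ) {n : ℕ} (ℓ : Fin n → ℕ) : Prop :=
  ∃ g : Fin n → List (Fin d), (∀ i, (g i).length = ℓ i) ∧ ∀ i j, g i <+: g j → i = j

/-- Kraft's inequality: the words of length `L` extending distinct codewords are distinct. -/
lemma kraft_le {d n : ℕ} {ℓ : Fin n → ℕ} (h : IsCodeLengths d ℓ) {L : ℕ} (hL : ∀ i, ℓ i ≤ L) :
    ∑ i, d ^ (L - ℓ i) ≤ d ^ L := by
  obtain ⟨g, hg, hp⟩ := h
  have hgL : ∀ i, (g i).length ≤ L := fun i => (hg i).le.trans (hL i)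
  have hdisj : ((Finset.univ : Finset (Fin n)) : Set (Fin n)).PairwiseDisjoint
      (fun i => extensions L (g i)) := by
    intro i _ j _ hij
    refine Finset.disjoint_left.2 fun w hi hj => hij ?_
    have h1 := ((mem_extensions (hgL i)).1 hi).2
    have h2 := ((mem_extensions (hgL j)).1 hj).2
    rcases List.prefix_or_prefix_of_prefix h1 h2 with h | h
    · exact hp _ _ h
    · exact (hp _ _ h).symm
  calc ∑ i, d ^ (L - ℓ i) = ∑ i, (extensions L (g i)).card :=
        Finset.sum_congr rfl fun i _ => by rw [card_extensions, hg]
    _ = (Finset.univ.biUnion fun i => extensions L (g i)).card := (Finset.card_biUnion hdisj).symm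
    _ ≤ (wordsOfLength d L).card := by
        refine Finset.card_le_card fun w hw => ?_
        obtain ⟨i, -, hi⟩ := Finset.mem_biUnion.1 hw
        exact mem_wordsOfLength.2 ((mem_extensions (hgL i)).1 hi).1
    _ = d ^ L := card_wordsOfLength d L

/-- The converse of Kraft's inequality, by greedy choice of the words in increasing order of
length. -/
lemma exists_of_kraft {d : ℕ} (hd : 0 < d) {ι : Type*} [DecidableEq ι] (ℓ : ι → ℕ) (L : ℕ)
    (s : Finset ι) (hL : ∀ i ∈ s, ℓ i ≤ L) (h : ∑ i ∈ s, d ^ (L - ℓ i) ≤ d ^ L) :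
    ∃ g : ι → List (Fin d), (∀ i ∈ s, (g i).length = ℓ i) ∧
      ∀ i ∈ s, ∀ j ∈ s, g i <+: g j → i = j := by
  induction s using Finset.induction_on_max_value ℓ with
  | empty => exact ⟨fun _ => [], by simp, by simp⟩
  | insert a s has hmax ih =>
    rw [Finset.sum_insert has] at h
    obtain ⟨g, hg, hp⟩ := ih (fun i hi => hL i (Finset.mem_insert_of_mem hi)) (by omega)
    have hgL : ∀ i ∈ s, (g i).length ≤ L := fun i hi =>
      (hg i hi).le.trans (hL i (Finset.mem_insert_of_mem hi))
    -- A word of length `L` extending no earlier codeword; the new codeword is its truncation.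
    obtain ⟨w, hw, hnot⟩ : ∃ w ∈ wordsOfLength d L, w ∉ s.biUnion fun i => extensions L (g i) := by
      apply Finset.exists_mem_notMem_of_card_lt_card
      calc (s.biUnion fun i => extensions L (g i)).card
          ≤ ∑ i ∈ s, (extensions L (g i)).card := Finset.card_biUnion_le
        _ = ∑ i ∈ s, d ^ (L - ℓ i) :=
            Finset.sum_congr rfl fun i hi => by rw [card_extensions, hg i hi]
        _ < d ^ L := by have : 0 < d ^ (L - ℓ a) := Nat.pow_pos hd
                        omega
        _ = (wordsOfLength d L).card := (card_wordsOfLength d L).symm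
    rw [mem_wordsOfLength] at hw
    have hvl : (w.take (ℓ a)).length = ℓ a := by
      rw [List.length_take, hw]
      exact min_eq_left (hL a (Finset.mem_insert_self _ _))
    have hv : ∀ i ∈ s, ¬ g i <+: w.take (ℓ a) := fun i hi hpre =>
      hnot (Finset.mem_biUnion.2 ⟨i, hi, (mem_extensions (hgL i hi)).2
        ⟨hw, hpre.trans (List.take_prefix _ _)⟩⟩)
    have hne : ∀ i ∈ s, i ≠ a := fun i hi he => has (he ▸ hi)
    refine ⟨Function.update g a (w.take (ℓ a)), ?_, ?_⟩
    · intro i hi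
      rcases Finset.mem_insert.1 hi with rfl | hi
      · rw [Function.update_self, hvl]
      · rw [Function.update_of_ne (hne i hi), hg i hi]
    · intro i hi j hj hij
      rcases Finset.mem_insert.1 hi with rfl | hi' <;> rcases Finset.mem_insert.1 hj with rfl | hj'
      · rfl
      · rw [Function.update_self, Function.update_of_ne (hne j hj')] at hij
        -- The new word is at least as long as the earlier ones.
        have hle := hmax j hj'
        have heq : w.take (ℓ i) = g j := hij.eq_of_length_le (by rw [hvl, hg j hj']; exact hle)
        exact absurd (heq ▸ List.prefix_rfl) (hv j hj')
      · rw [Function.update_self, Function.update_of_ne (hne i hi')] at hij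
        exact absurd hij (hv i hi')
      · rw [Function.update_of_ne (hne i hi'), Function.update_of_ne (hne j hj')] at hij
        exact hp i hi' j hj' hij

/-! ### Lengths of minimal cost -/

/-- The cost of a family of lengths, paired with the tie-breaking weight `∑ (i + 1) * ℓ i`. -/
noncomputable def lexCost {n : ℕ} (a : Fin n → ℝ≥0) (ℓ : Fin n → ℕ) : ℝ≥0 ×ₗ ℕ :=
  toLex (∑ i, (ℓ i : ℝ≥0) * a i, ∑ i : Fin n, ((i : ℕ) + 1) * ℓ i)

/-- A realisable family of lengths of least `lexCost` exists because `Fin n → ℕ` is well quasi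
ordered and `lexCost` is monotone. -/
lemma exists_minimal_lengths {d n : ℕ} (hd : 2 ≤ d) (a : Fin n → ℝ≥0) :
    ∃ ℓ : Fin n → ℕ, IsCodeLengths d ℓ ∧
      ∀ ℓ' : Fin n → ℕ, IsCodeLengths d ℓ' → lexCost a ℓ ≤ lexCost a ℓ' := by
  have hmono : Monotone (lexCost a) := by
    intro ℓ ℓ' h
    refine Prod.Lex.toLex_mono ⟨?_, ?_⟩
    · dsimp only
      refine Finset.sum_le_sum fun i _ => ?_
      have : (ℓ i : ℝ≥0) ≤ ℓ' i := by exact_mod_cast h i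
      gcongr
    · dsimp only
      refine Finset.sum_le_sum fun i _ => ?_
      have := h i
      gcongr
  have hwf : (lexCost a '' {ℓ | IsCodeLengths d ℓ}).IsWF :=
    ((Set.isPWO_of_wellQuasiOrderedLE {ℓ : Fin n → ℕ | IsCodeLengths d ℓ}).image_of_monotone
      hmono).isWF
  -- All lengths equal to `n` are realisable, as `n ≤ d ^ n`.
  have hne : (lexCost a '' {ℓ | IsCodeLengths d ℓ}).Nonempty := by
    refine ⟨_, fun _ => n, ?_, rfl⟩
    obtain ⟨g, h1, h2⟩ := exists_of_kraft (d := d) (by omega) (fun _ : Fin n => n) n Finset.univ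
      (by simp) (by simpa using (Nat.lt_pow_self (by omega)).le)
    exact ⟨g, fun i => h1 i (Finset.mem_univ i),
      fun i j => h2 i (Finset.mem_univ i) j (Finset.mem_univ j)⟩
  obtain ⟨ℓ, hℓ, hmin⟩ := hwf.min_mem hne
  exact ⟨ℓ, hℓ, fun m hm => hmin.le.trans (hwf.min_le hne ⟨m, hm, rfl⟩)⟩

/-- The exchange argument: if `i < j` but `ℓ i < ℓ j`, swapping the two lengths does not increase
the cost and decreases the tie-breaking weight. -/
lemma antitone_of_minimal {d n : ℕ} {a : Fin n → ℝ≥0} (ha : Monotone a) {ℓ : Fin n → ℕ}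
    (hℓ : IsCodeLengths d ℓ)
    (hmin : ∀ ℓ' : Fin n → ℕ, IsCodeLengths d ℓ' → lexCost a ℓ ≤ lexCost a ℓ') :
    Antitone ℓ := by
  intro i j hij
  by_contra! hlt
  have hij' : i ≠ j := by
    rintro rfl
    exact lt_irrefl _ hlt
  have hlt' : (i : ℕ) < j := lt_of_le_of_ne hij (Fin.val_ne_of_ne hij')
  have hcode : IsCodeLengths d (ℓ ∘ Equiv.swap i j) := by
    obtain ⟨g, hg, hp⟩ := hℓ
    exact ⟨g ∘ Equiv.swap i j, fun x => hg _, fun x y h => (Equiv.swap i j).injective (hp _ _ h)⟩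
  have hmem : j ∈ (Finset.univ : Finset (Fin n)).erase i :=
    Finset.mem_erase.2 ⟨hij'.symm, Finset.mem_univ j⟩
  refine absurd (hmin _ hcode) (not_le.2 (Prod.Lex.toLex_lt_toLex'.2 ⟨?_, fun _ => ?_⟩))
  · rw [← Finset.add_sum_erase _ _ (Finset.mem_univ i), ← Finset.add_sum_erase _ _ hmem,
      ← Finset.add_sum_erase (a := i) _ (fun x => (ℓ x : ℝ≥0) * a x) (Finset.mem_univ i),
      ← Finset.add_sum_erase _ (fun x => (ℓ x : ℝ≥0) * a x) hmem, ← add_assoc, ← add_assoc]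
    refine add_le_add ?_ (le_of_eq (Finset.sum_congr rfl fun x hx => ?_))
    · simp only [Function.comp, Equiv.swap_apply_left, Equiv.swap_apply_right]
      have h1 : (ℓ i : ℝ≥0) ≤ ℓ j := by exact_mod_cast hlt.le
      have := mul_add_mul_le_mul_add_mul h1 (ha hij)
      rw [add_comm]
      exact this
    · simp only [Finset.mem_erase] at hx
      simp only [Function.comp, Equiv.swap_apply_of_ne_of_ne hx.2.1 hx.1]
  · change ∑ x : Fin n, ((x : ℕ) + 1) * (ℓ ∘ Equiv.swap i j) x < ∑ x : Fin n, ((x : ℕ) + 1) * ℓ x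
    rw [← Finset.add_sum_erase _ _ (Finset.mem_univ i), ← Finset.add_sum_erase _ _ hmem,
      ← Finset.add_sum_erase (a := i) _ (fun x : Fin n => ((x : ℕ) + 1) * ℓ x) (Finset.mem_univ i),
      ← Finset.add_sum_erase _ (fun x : Fin n => ((x : ℕ) + 1) * ℓ x) hmem,
      ← add_assoc, ← add_assoc]
    refine add_lt_add_of_lt_of_le ?_ (le_of_eq (Finset.sum_congr rfl fun x hx => ?_))
    · simp only [Function.comp, Equiv.swap_apply_left, Equiv.swap_apply_right]
      nlinarith [mul_add_mul_lt_mul_add_mul hlt' hlt]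
    · simp only [Finset.mem_erase] at hx
      simp only [Function.comp, Equiv.swap_apply_of_ne_of_ne hx.2.1 hx.1]

/-- Shortening a longest word costs `d - 1` in the Kraft sum, so minimality bounds the slack. -/
lemma slack_lt_of_minimal {d n : ℕ} (hd : 2 ≤ d) {a : Fin n → ℝ≥0} {ℓ : Fin n → ℕ}
    (hmin : ∀ ℓ' : Fin n → ℕ, IsCodeLengths d ℓ' → lexCost a ℓ ≤ lexCost a ℓ')
    (e : Fin n) (he : ∀ i, ℓ i ≤ ℓ e) (hpos : 1 ≤ ℓ e) :
    d ^ ℓ e < ∑ i, d ^ (ℓ e - ℓ i) + (d - 1) := by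
  by_contra! hle
  set ℓ' := Function.update ℓ e (ℓ e - 1) with hℓ'
  have hself : ℓ' e = ℓ e - 1 := Function.update_self ..
  have hother : ∀ i ∈ (Finset.univ : Finset (Fin n)).erase e, ℓ' i = ℓ i := fun i hi =>
    Function.update_of_ne (Finset.ne_of_mem_erase hi) ..
  have hle' : ∀ i, ℓ' i ≤ ℓ i := by
    intro i
    by_cases hi : i = e
    · subst hi
      omega
    · exact (hother i (by simp [hi])).le
  have hcode : IsCodeLengths d ℓ' := by
    obtain ⟨g, h1, h2⟩ := exists_of_kraft (d := d) (by omega) ℓ' (ℓ e) Finset.univ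
      (fun i _ => (hle' i).trans (he i)) (by
        rw [← Finset.add_sum_erase _ _ (Finset.mem_univ e)] at hle ⊢
        rw [Finset.sum_congr rfl fun i hi => by rw [hother i hi], hself,
          show ℓ e - (ℓ e - 1) = 1 by omega]
        simp only [Nat.sub_self, pow_zero, pow_one] at hle ⊢
        omega)
    exact ⟨g, fun i => h1 i (Finset.mem_univ i),
      fun i j => h2 i (Finset.mem_univ i) j (Finset.mem_univ j)⟩
  refine absurd (hmin _ hcode) (not_le.2 (Prod.Lex.toLex_lt_toLex'.2 ⟨?_, fun _ => ?_⟩))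
  · dsimp only
    refine Finset.sum_le_sum fun i _ => ?_
    have : (ℓ' i : ℝ≥0) ≤ ℓ i := by exact_mod_cast hle' i
    gcongr
  · dsimp only
    refine Finset.sum_lt_sum (fun i _ => Nat.mul_le_mul_left _ (hle' i))
      ⟨e, Finset.mem_univ e, Nat.mul_lt_mul_of_pos_left ?_ (Nat.succ_pos _)⟩
    omega

/-! ### The slack in Kraft's inequality -/

/-- The congruences modulo `d - 1` and `d`: if the slack in Kraft's inequality is less than `d - 1`
then it equals `d - k`, and at least `k` words have maximal length. -/
lemma slack_eq_and_le_card {d n k : ℕ} (hd : 2 ≤ d) (hk2 : 2 ≤ k) (hkd : k ≤ d)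
    (hkmod : k ≡ n [MOD d - 1]) (ℓ : Fin n → ℕ) (e : Fin n) (he : ∀ i, ℓ i ≤ ℓ e)
    (hpos : 1 ≤ ℓ e) (hkraft : ∑ i, d ^ (ℓ e - ℓ i) ≤ d ^ ℓ e)
    (hslack : d ^ ℓ e < ∑ i, d ^ (ℓ e - ℓ i) + (d - 1)) :
    ∑ i, d ^ (ℓ e - ℓ i) + (d - k) = d ^ ℓ e ∧
      k ≤ (Finset.univ.filter fun i => ℓ i = ℓ e).card := by
  obtain ⟨S, hS⟩ := Nat.exists_eq_add_of_le hkraft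
  have hd1 : d ≡ 1 [MOD d - 1] := by
    have : (1 : ℕ) ≡ d [MOD d - 1] := (Nat.modEq_iff_dvd' (by omega)).2 dvd_rfl
    exact this.symm
  have hpow : ∀ m, d ^ m ≡ 1 [MOD d - 1] := fun m => by simpa using hd1.pow m
  have hsum : ∑ i, d ^ (ℓ e - ℓ i) ≡ n [MOD d - 1] := by
    have : ∀ s : Finset (Fin n), ∑ i ∈ s, d ^ (ℓ e - ℓ i) ≡ s.card [MOD d - 1] := by
      intro s
      induction s using Finset.induction_on with
      | empty => simp [Nat.ModEq.refl]
      | insert x s hx ih =>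
        rw [Finset.sum_insert hx, Finset.card_insert_of_notMem hx, add_comm]
        exact ih.add (hpow _)
    simpa using this Finset.univ
  have hSk : d ≡ k + S [MOD d - 1] := by
    have h1 : d ^ ℓ e ≡ n + S [MOD d - 1] := by
      rw [hS]
      exact hsum.add_right S
    exact hd1.trans ((hpow _).symm.trans (h1.trans (hkmod.symm.add_right S)))
  -- `k + S` lies in `[2, 2 * d - 2]`, where only `d` is congruent to `d` modulo `d - 1`.
  have hSeq : k + S = d := by
    rcases le_total d (k + S) with h | h
    · have h2 := (Nat.modEq_iff_dvd' h).1 hSk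
      have := Nat.eq_zero_of_dvd_of_lt h2 (by omega)
      omega
    · have h2 := (Nat.modEq_iff_dvd' h).1 hSk.symm
      have := Nat.eq_zero_of_dvd_of_lt h2 (by omega)
      omega
  refine ⟨by omega, ?_⟩
  set m := (Finset.univ.filter fun i => ℓ i = ℓ e).card with hm
  have hmpos : 0 < m := Finset.card_pos.2 ⟨e, by simp⟩
  have hsplit : ∃ q, ∑ i, d ^ (ℓ e - ℓ i) = m + d * q := by
    rw [← Finset.sum_filter_add_sum_filter_not Finset.univ (fun i => ℓ i = ℓ e)]
    obtain ⟨q, hq⟩ : d ∣ ∑ i with ¬ ℓ i = ℓ e, d ^ (ℓ e - ℓ i) := by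
      refine Finset.dvd_sum fun i hi => dvd_pow_self d ?_
      have h1 := (Finset.mem_filter.1 hi).2
      have h2 := he i
      omega
    refine ⟨q, ?_⟩
    rw [hq, hm, Finset.card_eq_sum_ones]
    congr 1
    refine Finset.sum_congr rfl fun i hi => ?_
    rw [(Finset.mem_filter.1 hi).2, Nat.sub_self, pow_zero]
  obtain ⟨q, hq⟩ := hsplit
  obtain ⟨p, hp⟩ : d ∣ d ^ ℓ e := dvd_pow_self d (by omega)
  by_contra! hlt
  have hdvd : d ∣ m + S := by
    refine (Nat.dvd_add_right (dvd_mul_right d q)).1 ⟨p, ?_⟩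
    rw [← hp, hS, hq]
    ring
  have := Nat.le_of_dvd (by omega) hdvd
  omega

/-! ### The optimal code -/

/-- There is an α-optimal tree in which the `k` smallest weights `a 0, …, a (k-1)`
label sibling leaves at the deepest level, with no other siblings. -/
theorem stmt_14 {d : ℕ} (hd : 2 ≤ d) (n k : ℕ) (hn : 2 ≤ n)
    (a : Fin n → ℝ≥0) (ha : Monotone a)
    (hk2 : 2 ≤ k) (hkd : k ≤ d) (hkmod : k ≡ n [MOD d - 1]) :
    ∃ (C : Finset (List (Fin d))) (g : Fin n → List (Fin d))
      (r : List (Fin d) → ℝ≥0) (u : List (Fin d)),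
      IsPrefixCode (↑C : Set (List (Fin d))) ∧
      -- `g` is a bijection from `Fin n` onto `C` and `r = a ∘ g⁻¹`
      Function.Injective g ∧ C = Finset.image g Finset.univ ∧
      (∀ i, r (g i) = a i) ∧
      -- (1) `(C, r)` is α-optimal
      (∀ (D : Finset (List (Fin d))) (s : List (Fin d) → ℝ≥0)
          (f : List (Fin d) → List (Fin d)),
        IsPrefixCode (↑D : Set (List (Fin d))) →
        Set.InjOn f ↑C → D = C.image f → (∀ x ∈ C, r x = s (f x)) →
        ∑ x ∈ C, (x.length : ℝ≥0) * r x ≤ ∑ y ∈ D, (y.length : ℝ≥0) * s y) ∧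
      -- (2) for each `i < k`, `u ++ [i] ∈ C` with label `a i`, at maximum depth
      (∀ (i : Fin n) (hik : (i : ℕ) < k),
        u ++ [(⟨(i : ℕ), lt_of_lt_of_le hik hkd⟩ : Fin d)] ∈ C ∧
        r (u ++ [(⟨(i : ℕ), lt_of_lt_of_le hik hkd⟩ : Fin d)]) = a i) ∧
      (∀ z ∈ C, z.length ≤ u.length + 1) ∧
      -- (3) the `u ++ [i]`, `i < k`, have no other siblings
      (∀ z ∈ C, u <+: z → ∃ i : Fin d, (i : ℕ) < k ∧ z = u ++ [i]) := by
  have hkn : k ≤ n := by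
    by_contra! hlt
    have := Nat.le_of_dvd (by omega) ((Nat.modEq_iff_dvd' hlt.le).1 hkmod.symm)
    omega
  obtain ⟨ℓ, hℓ, hmin⟩ := exists_minimal_lengths hd a
  have hanti := antitone_of_minimal ha hℓ hmin
  let e : Fin n := ⟨0, by omega⟩
  have he : ∀ i, ℓ i ≤ ℓ e := fun i => hanti (Fin.mk_le_of_le_val (Nat.zero_le _))
  have hkraft := kraft_le hℓ he
  have hpos : 1 ≤ ℓ e := by
    by_contra! h0
    have h00 : ℓ e = 0 := by omega
    simp [h00] at hkraft
    omega
  obtain ⟨hslack, hcard⟩ := slack_eq_and_le_card hd hk2 hkd hkmod ℓ e he hpos hkraft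
    (slack_lt_of_minimal hd hmin e he hpos)
  have hdeep : ∀ i : Fin n, (i : ℕ) < k → ℓ i = ℓ e := by
    intro i hi
    by_contra hne
    have hsub : (Finset.univ.filter fun j => ℓ j = ℓ e) ⊆ Finset.Iio i := by
      intro j hj
      rw [Finset.mem_Iio]
      by_contra! hij
      have h1 := hanti hij
      rw [(Finset.mem_filter.1 hj).2] at h1
      exact hne (le_antisymm (he i) h1)
    have := Finset.card_le_card hsub
    rw [Fin.card_Iio] at this
    omega
  -- The merged code: index `e` stands for the common parent of the first `k` words.
  let t : Finset (Fin n) := Finset.univ.filter fun i => ¬ (i : ℕ) < k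
  have het : e ∉ t := by
    simp only [t, e, Finset.mem_filter, Finset.mem_univ, true_and, not_not]
    omega
  have hte : ∀ i ∈ t, i ≠ e := fun i hi h => het (h ▸ hi)
  have hmemt : ∀ i : Fin n, ¬ (i : ℕ) < k → i ∈ t := fun i hi => by simpa [t] using hi
  obtain ⟨h, hlen, hpre⟩ := exists_of_kraft (d := d) (by omega)
    (Function.update ℓ e (ℓ e - 1)) (ℓ e) (insert e t) (by
      intro i _
      by_cases hi : i = e
      · subst hi
        simp
      · simpa [hi] using he i) (by
      have hfirst : ∑ i ∈ (Finset.univ.filter fun i : Fin n => (i : ℕ) < k), d ^ (ℓ e - ℓ i) = k := by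
        rw [Finset.sum_congr rfl fun (i : Fin n) hi => by
          rw [hdeep i (Finset.mem_filter.1 hi).2, Nat.sub_self, pow_zero]]
        rw [← Finset.card_eq_sum_ones, Fin.card_filter_val_lt]
        exact min_eq_right hkn
      have hall := Finset.sum_filter_add_sum_filter_not Finset.univ
        (fun i : Fin n => (i : ℕ) < k) (fun i => d ^ (ℓ e - ℓ i))
      rw [hfirst] at hall
      rw [Finset.sum_insert het, Function.update_self, show ℓ e - (ℓ e - 1) = 1 by omega, pow_one,
        Finset.sum_congr rfl fun i hi => by rw [Function.update_of_ne (hte i hi)]]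
      change d + ∑ i ∈ (Finset.univ.filter fun i : Fin n => ¬ (i : ℕ) < k), d ^ (ℓ e - ℓ i) ≤ d ^ ℓ e
      omega)
  have hue : (h e).length = ℓ e - 1 := by
    rw [hlen e (Finset.mem_insert_self _ _), Function.update_self]
  have hsep : ∀ i ∈ t, ¬ h e <+: h i := fun i hi hp => hte i hi
    (hpre e (Finset.mem_insert_self _ _) i (Finset.mem_insert_of_mem hi) hp).symm
  have hsep' : ∀ i ∈ t, ¬ h i <+: h e := fun i hi hp => hte i hi
    (hpre i (Finset.mem_insert_of_mem hi) e (Finset.mem_insert_self _ _) hp)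
  let g : Fin n → List (Fin d) := fun i =>
    if hik : (i : ℕ) < k then h e ++ [(⟨(i : ℕ), lt_of_lt_of_le hik hkd⟩ : Fin d)] else h i
  have hg1 : ∀ (i : Fin n) (hik : (i : ℕ) < k),
      g i = h e ++ [(⟨(i : ℕ), lt_of_lt_of_le hik hkd⟩ : Fin d)] := fun i hik => dif_pos hik
  have hg2 : ∀ i : Fin n, ¬ (i : ℕ) < k → g i = h i := fun i hik => dif_neg hik
  have hglen : ∀ i, (g i).length = ℓ i := by
    intro i
    by_cases hik : (i : ℕ) < k
    · rw [hg1 i hik, hdeep i hik, List.length_append, hue, List.length_singleton]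
      omega
    · rw [hg2 i hik, hlen i (Finset.mem_insert_of_mem (hmemt i hik)),
        Function.update_of_ne (hte i (hmemt i hik))]
  have hgpre : ∀ i j, g i <+: g j → i = j := by
    intro i j hij
    by_cases hi : (i : ℕ) < k <;> by_cases hj : (j : ℕ) < k
    · rw [hg1 i hi, hg1 j hj] at hij
      have := hij.eq_of_length (by simp)
      simpa [Fin.ext_iff] using this
    · rw [hg1 i hi, hg2 j hj] at hij
      exact absurd ((List.prefix_append _ _).trans hij) (hsep j (hmemt j hj))
    · rw [hg2 i hi, hg1 j hj, List.prefix_concat_iff] at hij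
      rcases hij with hij | hij
      · exact absurd (hij ▸ List.prefix_append _ _) (hsep i (hmemt i hi))
      · exact absurd hij (hsep' i (hmemt i hi))
    · rw [hg2 i hi, hg2 j hj] at hij
      exact hpre i (Finset.mem_insert_of_mem (hmemt i hi)) j
        (Finset.mem_insert_of_mem (hmemt j hj)) hij
  have hginj : Function.Injective g := fun i j hij => hgpre i j (hij ▸ List.prefix_rfl)
  have hr : ∀ i, Function.extend g a 0 (g i) = a i := fun i => hginj.extend_apply a 0 i
  refine ⟨Finset.image g Finset.univ, g, Function.extend g a 0, h e, ?_, hginj, rfl, hr,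
    ?_, ?_, ?_, ?_⟩
  · intro x hx y hy hxy
    simp only [Finset.coe_image, Finset.coe_univ, Set.image_univ, Set.mem_range] at hx hy
    obtain ⟨i, rfl⟩ := hx
    obtain ⟨j, rfl⟩ := hy
    rw [hgpre i j hxy]
  · rintro D s f hD hf rfl hs
    have hmem : ∀ i, g i ∈ Finset.image g Finset.univ := fun i =>
      Finset.mem_image_of_mem g (Finset.mem_univ i)
    have hcode : IsCodeLengths d fun i => (f (g i)).length := by
      refine ⟨fun i => f (g i), fun _ => rfl, fun i j hij => hginj ?_⟩
      exact hf (hmem i) (hmem j) (hD _ (Finset.mem_image_of_mem f (hmem i)) _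
        (Finset.mem_image_of_mem f (hmem j)) hij)
    have hcost := (Prod.Lex.toLex_le_toLex'.1 (hmin _ hcode)).1
    rw [Finset.sum_image hf, Finset.sum_image hginj.injOn, Finset.sum_image hginj.injOn]
    calc ∑ i, ((g i).length : ℝ≥0) * Function.extend g a 0 (g i) = ∑ i, (ℓ i : ℝ≥0) * a i :=
          Finset.sum_congr rfl fun i _ => by rw [hr, hglen]
      _ ≤ ∑ i, ((f (g i)).length : ℝ≥0) * a i := hcost
      _ = ∑ i, ((f (g i)).length : ℝ≥0) * s (f (g i)) :=
          Finset.sum_congr rfl fun i _ => by rw [← hs _ (hmem i), hr]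
  · intro i hik
    rw [← hg1 i hik]
    exact ⟨Finset.mem_image_of_mem g (Finset.mem_univ i), hr i⟩
  · intro z hz
    obtain ⟨i, -, rfl⟩ := Finset.mem_image.1 hz
    have := he i
    rw [hglen, hue]
    omega
  · intro z hz huz
    obtain ⟨i, -, rfl⟩ := Finset.mem_image.1 hz
    by_cases hik : (i : ℕ) < k
    · exact ⟨_, hik, hg1 i hik⟩
    · rw [hg2 i hik] at huz
      exact absurd huz (hsep i (hmemt i hik))
end

section
/- Let d ≥ 2, let n > k where 2 ≤ k ≤ d and k ≡ n (mod d−1), and let a_0 ≤ a_1 ≤ ⋯ ≤ a_{n−1} be nonnegative reals. Let b = a_0 + ⋯ + a_{k−1}. Suppose (D, s) is a finite prefix code over Fin d with labeling s : D → ℝ≥0 whose multiset of labels is {b, a_k, …, a_{n−1}}, suppose (D, s) is α-optimal (i.e., α(D, s) ≤ α(D′, s′) for every labeled finite prefix code (D′, s′) over Fin d admitting a bijection f : D → D′ with s = s′ ∘ f), and let y ∈ D with s(y) = b. Define C = (D \ {y}) ∪ {y ++ [i] : i < k} and r : C → ℝ≥0 by r(y ++ [i]) = a_i for i < k and r(z)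 = s(z) for z ∈ D \ {y}. Then C is a finite prefix code, the multiset of labels of (C, r) is {a_0, …, a_{n−1}}, and (C, r) is α-optimal. -/
/-!
The cost `α` of a labeled code depends only on the codeword lengths, and the lengths available to
prefix codes over `Fin d` are exactly those with Kraft sum `∑ d ^ (-l i) ≤ 1`
(`kraft_of_prefixCode`, `exists_code_of_kraft`). So optimality can be tested on length functions
(`optimal_le_of_kraft`).

Since `α(C, r) = α(D, s) + b`, it suffices to turn an arbitrary length function `l` for
`a 0, …, a (n-1)` with Kraft sum at most `1` into one for `b, a k, …, a (n-1)` that is cheaper by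
at least `b`. `exists_balanced` first replaces `l`, at no extra cost, by a length function of
maximum `L` in which `a 0, …, a (k-1)` all have length `L`. The corresponding `k` words are then
merged into a single word of length `L - 1`, which saves `b`.

The congruence `k ≡ n [MOD d - 1]` makes both steps work. Let `T = ∑ d ^ (L - l i)`, so that
`T ≤ d ^ L` is Kraft's inequality, and let `S = d ^ L - T` be the slack. Modulo `d - 1` one has
`T ≡ n ≡ k` and `d ^ L ≡ 1`, so `k + S ≡ 1`; as `k ≥ 2` this forces `S ≥ d - k`, which is what the
merge needs. To balance `l`, sort it so that small labels get long words (rearrangement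
inequality). If fewer than `k` words have the maximal length `L`, then `S ≥ d - 1`: otherwise
`S = d - k`, and reducing `T + S = d ^ L` modulo `d` shows that the number of words of length `L`
is congruent to `k` modulo `d`, which is impossible for a number in `[1, k - 1]`. A slack of `d - 1`
allows one longest word to be shortened by one letter, so induction on the total length applies.
-/

open scoped NNReal

/-! ### Reindexing by labels -/

/-- Two finite families with the same multiset of values differ by a reindexing: their fibres over
each value have the same cardinality. -/
theorem exists_equiv_of_map_eq {α β γ : Type*} [Fintype α] [Fintype β] [DecidableEq γ]
    (f : α → γ) (g : β → γ)
    (h : (Finset.univ : Finset α).val.map f = (Finset.univ : Finset β).val.map g) :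
    ∃ e : α ≃ β, ∀ x, g (e x) = f x := by
  have hc : ∀ c, Fintype.card {x // f x = c} = Fintype.card {y // g y = c} := by
    intro c
    have := congrArg (Multiset.count c) h
    rw [Multiset.count_map, Multiset.count_map] at this
    rw [Fintype.card_subtype, Fintype.card_subtype]
    simpa [Finset.card_def, eq_comm] using this
  exact ⟨Equiv.ofFiberEquiv fun c => Fintype.equivOfCardEq (hc c),
    fun x => Equiv.ofFiberEquiv_map _ x⟩

theorem exists_equiv_of_labels {α γ ι : Type*} [Fintype ι] [DecidableEq γ]
    (D : Finset α) (s : α → γ) (c : ι → γ)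
    (h : D.val.map s = (Finset.univ : Finset ι).val.map c) :
    ∃ e : D ≃ ι, ∀ x : D, c (e x) = s x := by
  refine exists_equiv_of_map_eq (fun x : D => s x) c ?_
  rw [← h]
  exact Multiset.attach_map_val' D.val s

/-! ### Kraft's inequality and its converse -/

/-- Kraft's inequality with denominators cleared, relative to any upper bound `L` of the lengths. -/
theorem kraft_iff {ι : Type*} {d : ℕ} (hd : 0 < d) (t : Finset ι) (l : ι → ℕ) (L : ℕ)
    (hL : ∀ i ∈ t, l i ≤ L) :
    ∑ i ∈ t, (1 / (d : ℝ)) ^ l i ≤ 1 ↔ ∑ i ∈ t, d ^ (L - l i) ≤ d ^ L := by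
  have hd' : (0 : ℝ) < d := by exact_mod_cast hd
  have h1 : ((∑ i ∈ t, d ^ (L - l i) : ℕ) : ℝ) = (∑ i ∈ t, (1 / (d : ℝ)) ^ l i) * (d : ℝ) ^ L := by
    push_cast
    rw [Finset.sum_mul]
    refine Finset.sum_congr rfl fun i hi => ?_
    rw [pow_sub₀ _ hd'.ne' (hL i hi), one_div, inv_pow, mul_comm]
  rw [← Nat.cast_le (α := ℝ), h1]
  push_cast
  rw [mul_le_iff_le_one_left (by positivity)]

/-- Kraft's inequality. A prefix code not containing the empty word is uniquely decodable, so the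
Kraft–McMillan inequality applies; the only one containing the empty word is `{[]}`. -/
theorem kraft_of_prefixCode {d : ℕ} (hd : 2 ≤ d) (C : Finset (List (Fin d)))
    (hC : IsPrefixCode (C : Set (List (Fin d)))) :
    ∑ x ∈ C, (1 / (d : ℝ)) ^ x.length ≤ 1 := by
  by_cases h0 : [] ∈ C
  · have : C = {[]} := by
      ext x
      simp only [Finset.mem_singleton]
      exact ⟨fun hx => (hC [] h0 x hx List.nil_prefix).symm, fun hx => hx ▸ h0⟩
    simp [this]
  have hne : ∀ w ∈ C, w ≠ [] := fun w hw h => h0 (h ▸ hw)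
  have : Nonempty (Fin d) := ⟨⟨0, by omega⟩⟩
  have hu : InformationTheory.UniquelyDecodable (C : Set (List (Fin d))) := by
    intro L₁
    induction L₁ with
    | nil =>
      intro L₂ _ h2 h
      cases L₂ with
      | nil => rfl
      | cons w L₂ =>
        simp at h
        exact absurd h.1 (hne w (h2 w (by simp)))
    | cons v L₁ ih =>
      intro L₂ h1 h2 h
      have hv := h1 v (by simp)
      cases L₂ with
      | nil =>
        simp at h
        exact absurd h.1 (hne v hv)
      | cons w L₂ =>
        have hw := h2 w (by simp)
        simp only [List.flatten_cons] at h
        have hvw : v = w := by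
          rcases List.prefix_or_prefix_of_prefix (List.prefix_append v L₁.flatten)
            (h ▸ List.prefix_append w L₂.flatten) with h' | h'
          · exact hC v hv w hw h'
          · exact (hC w hw v hv h').symm
        subst hvw
        rw [ih L₂ (fun x hx => h1 x (by simp [hx])) (fun x hx => h2 x (by simp [hx]))
          (List.append_cancel_left h)]
  simpa using InformationTheory.kraft_mcmillan_inequality hu

/-- Converse of Kraft's inequality. Codewords are chosen greedily in order of increasing length: by
counting, some word of the next length has no earlier codeword as a prefix. -/
theorem exists_code_of_kraft {ι : Type*} [DecidableEq ι] {d : ℕ} (hd : 2 ≤ d) (l : ι → ℕ)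
    (t : Finset ι) : ∑ i ∈ t, (1 / (d : ℝ)) ^ l i ≤ 1 →
    ∃ w : ι → List (Fin d), (∀ i ∈ t, (w i).length = l i) ∧
      ∀ i ∈ t, ∀ j ∈ t, w i <+: w j → i = j := by
  have hd0 : (0 : ℝ) < d := by exact_mod_cast (by omega : 0 < d)
  refine Finset.induction_on_max_value l t (by simp) ?_
  intro a t hat hmax ih hsum
  rw [Finset.sum_insert hat] at hsum
  have hpos : 0 < (1 / (d : ℝ)) ^ l a := by positivity
  obtain ⟨w, hwl, hwp⟩ := ih (by linarith)
  have hlt : ∑ i ∈ t, d ^ (l a - l i) < d ^ l a := by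
    have h := (kraft_iff (by omega : 0 < d) (insert a t) l (l a) (by simpa using hmax)).1
      (by rwa [Finset.sum_insert hat])
    rw [Finset.sum_insert hat] at h
    simp at h
    omega
  -- `bad` is the set of words of length `l a` extending a codeword already chosen.
  let bad : Finset (List (Fin d)) := t.biUnion fun i =>
    (Finset.univ : Finset (List.Vector (Fin d) (l a - l i))).image fun u => w i ++ u.toList
  let all : Finset (List (Fin d)) :=
    (Finset.univ : Finset (List.Vector (Fin d) (l a))).image fun u => u.toList
  have hbad : bad.card < all.card := by
    have h1 : all.card = d ^ l a := by
      rw [Finset.card_image_of_injective _ List.Vector.toList_injective]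
      simp
    rw [h1]
    refine lt_of_le_of_lt (Finset.card_biUnion_le.trans (Finset.sum_le_sum fun i _ => ?_)) hlt
    refine Finset.card_image_le.trans ?_
    simp
  obtain ⟨v, hv, hvb⟩ := Finset.exists_mem_notMem_of_card_lt_card hbad
  have hvl : v.length = l a := by
    obtain ⟨u, _, rfl⟩ := Finset.mem_image.1 hv
    simp
  have hnp : ∀ i ∈ t, ¬ w i <+: v := by
    rintro i hi ⟨u, rfl⟩
    refine hvb (Finset.mem_biUnion.2 ⟨i, hi, Finset.mem_image.2 ⟨⟨u, ?_⟩, Finset.mem_univ _, rfl⟩⟩)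
    have := hwl i hi
    simp at hvl
    omega
  have hne : ∀ i ∈ t, i ≠ a := fun i hi h => hat (h ▸ hi)
  refine ⟨Function.update w a v, ?_, ?_⟩
  · intro i hi
    rcases Finset.mem_insert.1 hi with rfl | hi
    · simpa using hvl
    · simpa [hne i hi] using hwl i hi
  · intro i hi j hj hij
    rcases Finset.mem_insert.1 hi with hi' | hi' <;> rcases Finset.mem_insert.1 hj with hj' | hj'
    · rw [hi', hj']
    · rw [hi', Function.update_self, Function.update_of_ne (hne j hj')] at hij
      have hl : v.length = (w j).length :=
        le_antisymm hij.length_le (by rw [hvl, hwl j hj']; exact hmax j hj')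
      exact absurd (hij.eq_of_length hl ▸ List.prefix_rfl) (hnp j hj')
    · rw [hj', Function.update_self, Function.update_of_ne (hne i hi')] at hij
      exact absurd hij (hnp i hi')
    · rw [Function.update_of_ne (hne i hi'), Function.update_of_ne (hne j hj')] at hij
      exact hwp i hi' j hj' hij

/-- An α-optimal code labeled by `c` costs no more than any length function satisfying Kraft's
inequality. -/
theorem optimal_le_of_kraft {ι : Type*} [Fintype ι] {d : ℕ} (hd : 2 ≤ d)
    (c : ι → ℝ≥0) (D : Finset (List (Fin d))) (s : List (Fin d) → ℝ≥0)
    (hlabels : D.val.map s = (Finset.univ : Finset ι).val.map c)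
    (hDopt : ∀ (D' : Finset (List (Fin d))) (s' : List (Fin d) → ℝ≥0)
        (f : List (Fin d) → List (Fin d)),
      IsPrefixCode (↑D' : Set (List (Fin d))) →
      Set.InjOn f ↑D → D' = D.image f → (∀ x ∈ D, s x = s' (f x)) →
      ∑ x ∈ D, (x.length : ℝ≥0) * s x ≤ ∑ x ∈ D', (x.length : ℝ≥0) * s' x)
    (l : ι → ℕ) (hl : ∑ i, (1 / (d : ℝ)) ^ l i ≤ 1) :
    ∑ x ∈ D, (x.length : ℝ≥0) * s x ≤ ∑ i, (l i : ℝ≥0) * c i := by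
  classical
  obtain ⟨e, he⟩ := exists_equiv_of_labels D s c hlabels
  obtain ⟨w, hwl, hwp⟩ := exists_code_of_kraft hd l Finset.univ hl
  have hwinj : Function.Injective w := fun i j h =>
    hwp i (by simp) j (by simp) (h ▸ List.prefix_rfl)
  let f : List (Fin d) → List (Fin d) := fun x => if h : x ∈ D then w (e ⟨x, h⟩) else []
  have hf : ∀ x (h : x ∈ D), f x = w (e ⟨x, h⟩) := fun x h => by simp [f, h]
  have hfinj : Set.InjOn f ↑D := by
    intro x hx z hz h
    rw [hf x hx, hf z hz] at h
    simpa using e.injective (hwinj h)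
  have hs : ∀ x ∈ D, s x = Function.extend w c 0 (f x) := by
    intro x hx
    rw [hf x hx, hwinj.extend_apply, he]
  refine (hDopt (D.image f) (Function.extend w c 0) f ?_ hfinj rfl hs).trans (le_of_eq ?_)
  · intro x hx z hz h
    obtain ⟨x, hx', rfl⟩ := Finset.mem_image.1 (Finset.mem_coe.1 hx)
    obtain ⟨z, hz', rfl⟩ := Finset.mem_image.1 (Finset.mem_coe.1 hz)
    rw [hf x hx', hf z hz'] at h ⊢
    rw [hwp _ (by simp) _ (by simp) h]
  · rw [Finset.sum_image hfinj, ← Finset.sum_coe_sort D, ← Equiv.sum_comp e]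
    refine Finset.sum_congr rfl fun x _ => ?_
    rw [hf x x.2, hwinj.extend_apply, hwl _ (by simp)]

/-! ### Balancing a length function -/

/-- The arithmetic of the slack `S = d ^ L - T`: it is at least `d - k`, with equality as soon as
`S < d - 1`. Both are stated without subtracting `T` or `k`. -/
theorem slack_arith {d k L T : ℕ} (hd : 2 ≤ d) (hk2 : 2 ≤ k) (hkd : k ≤ d)
    (hT : T ≡ k [MOD d - 1]) (hle : T ≤ d ^ L) :
    T + d ≤ d ^ L + k ∧ (d ^ L < T + (d - 1) → T + d = d ^ L + k) := by
  obtain ⟨e, rfl⟩ : ∃ e, d = e + 1 := ⟨d - 1, by omega⟩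
  obtain ⟨S, hS⟩ := Nat.exists_eq_add_of_le hle
  simp only [Nat.add_sub_cancel] at *
  have h1 : k + S ≡ 1 [MOD e] := by
    have h2 : (e + 1) ^ L ≡ 1 [MOD e] := by
      simpa using (Nat.ModEq.pow L (by simp [Nat.ModEq] : e + 1 ≡ 1 [MOD e]))
    exact ((hT.add_right S).symm.trans (by rw [← hS])).trans h2
  obtain ⟨q, hq⟩ := (Nat.modEq_iff_dvd' (by omega : 1 ≤ k + S)).1 h1.symm
  have hq1 : 1 ≤ q := by
    rcases Nat.eq_zero_or_pos q with rfl | h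
    · simp at hq; omega
    · exact h
  have hqe : e ≤ e * q := Nat.le_mul_of_pos_right e hq1
  refine ⟨by omega, fun hlt => ?_⟩
  have hq2 : q < 2 := by
    by_contra h
    have : e * 2 ≤ e * q := Nat.mul_le_mul_left e (by omega)
    omega
  have : q = 1 := by omega
  subst this
  omega

/-- Any lengths satisfying Kraft's inequality can be replaced, at no extra cost, by lengths bounded
by some `L ≥ 1`, equal to `L` on the `k` smallest labels, and with slack at least `d - k`. The proof
is by induction on the total length `N`. -/
theorem exists_balanced {d : ℕ} (hd : 2 ≤ d) (n k : ℕ)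
    (hk2 : 2 ≤ k) (hkd : k ≤ d) (hkn : k < n) (hkmod : k ≡ n [MOD d - 1])
    (a : Fin n → ℝ≥0) (ha : Monotone a) (N : ℕ) :
    ∀ l : Fin n → ℕ, ∑ i, l i = N → ∑ i, (1 / (d : ℝ)) ^ l i ≤ 1 →
    ∃ (l' : Fin n → ℕ) (L : ℕ), (∀ i, l' i ≤ L) ∧ (∀ i : Fin n, (i : ℕ) < k → l' i = L) ∧
      1 ≤ L ∧ ∑ i, d ^ (L - l' i) + d ≤ d ^ L + k ∧
      ∑ i, (l' i : ℝ≥0) * a i ≤ ∑ i, (l i : ℝ≥0) * a i := by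
  induction N using Nat.strong_induction_on with
  | _ N ih =>
  intro l hlN hl
  -- `m` is the rearrangement of `l` in decreasing order, so that `m z` below is its maximum.
  let τ : Equiv.Perm (Fin n) := Fin.revPerm.trans (Tuple.sort l)
  let m : Fin n → ℕ := l ∘ τ
  have hm : Antitone m := fun i j hij => by
    have := Tuple.monotone_sort l (Fin.rev_le_rev.2 hij)
    simpa [m, τ] using this
  have hmN : ∑ i, m i = N := by rw [← hlN]; exact Equiv.sum_comp τ l
  have hmK : ∑ i, (1 / (d : ℝ)) ^ m i ≤ 1 := by
    rw [← Equiv.sum_comp τ] at hl; exact hl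
  have hcost : ∑ i, (m i : ℝ≥0) * a i ≤ ∑ i, (l i : ℝ≥0) * a i := by
    have hav : Antivary (fun i => (m i : ℝ≥0)) a := by
      intro i j hij
      have : i ≤ j := le_of_lt (ha.reflect_lt hij)
      exact Nat.cast_le.2 (hm this)
    refine (hav.sum_mul_le_sum_comp_perm_mul (σ := τ⁻¹)).trans (le_of_eq ?_)
    simp [m]
  let z : Fin n := ⟨0, by omega⟩
  have hz : ∀ i, m i ≤ m z := fun i => hm (Fin.mk_le_of_le_val (Nat.zero_le _))
  set L := m z with hLdef
  have hT := (kraft_iff (by omega : 0 < d) Finset.univ m L (fun i _ => hz i)).1 hmK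
  have hL : 1 ≤ L := by
    by_contra h
    have hL0 : L = 0 := by omega
    rw [hL0] at hT
    simp at hT
    omega
  have hTmod : ∑ i, d ^ (L - m i) ≡ k [MOD d - 1] := by
    have h1 : ∀ i ∈ (Finset.univ : Finset (Fin n)), d ^ (L - m i) ≡ 1 [MOD d - 1] := fun i _ => by
      have : d ≡ 1 [MOD d - 1] := ((Nat.modEq_iff_dvd' (by omega : 1 ≤ d)).2 dvd_rfl).symm
      simpa using this.pow (L - m i)
    have h2 : ∑ i, d ^ (L - m i) ≡ ∑ _i : Fin n, 1 [MOD d - 1] := Nat.ModEq.sum h1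
    simp at h2
    exact h2.trans hkmod.symm
  obtain ⟨hA, hB⟩ := slack_arith hd hk2 hkd hTmod hT
  by_cases hall : ∀ i : Fin n, (i : ℕ) < k → m i = L
  · exact ⟨m, L, hz, hall, hL, hA, hcost⟩
  push Not at hall
  obtain ⟨j, hjk, hj⟩ := hall
  have hroom : ∑ i, d ^ (L - m i) + (d - 1) ≤ d ^ L := by
    by_contra h
    have hE := hB (by omega)
    -- The number of words of length `L` is at least `1` and less than `k`, while modulo `d` it is
    -- congruent to `T`, hence to `k`.
    have hc1 : (Finset.univ.filter fun i => m i = L).card < k := by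
      have hsub : (Finset.univ.filter fun i => m i = L) ⊆ Finset.Iio j := by
        intro i hi
        simp only [Finset.mem_filter, Finset.mem_univ, true_and, Finset.mem_Iio] at hi ⊢
        by_contra hij
        have := hm (not_lt.1 hij)
        have := hz j
        omega
      have := Finset.card_le_card hsub
      rw [Fin.card_Iio] at this
      omega
    have hc0 : 0 < (Finset.univ.filter fun i => m i = L).card :=
      Finset.card_pos.2 ⟨z, by simp [hLdef]⟩
    have hmd : ∑ i, d ^ (L - m i) ≡ (Finset.univ.filter fun i => m i = L).card [MOD d] := by
      rw [Finset.card_filter]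
      refine Nat.ModEq.sum fun i _ => ?_
      split_ifs with h'
      · simp [h', Nat.ModEq]
      · have := hz i
        exact (Nat.modEq_zero_iff_dvd).2 (dvd_pow_self d (by omega))
    have h3 : (Finset.univ.filter fun i => m i = L).card ≡ k [MOD d] := by
      have h4 : d ^ L + k ≡ 0 + k [MOD d] :=
        Nat.ModEq.add_right k ((Nat.modEq_zero_iff_dvd).2 (dvd_pow_self d (by omega)))
      rw [← hE] at h4
      have h5 : ∑ i, d ^ (L - m i) + d ≡ ∑ i, d ^ (L - m i) [MOD d] := by simp [Nat.ModEq]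
      simpa using hmd.symm.trans (h5.symm.trans h4)
    obtain ⟨q, hq⟩ := (Nat.modEq_iff_dvd' hc1.le).1 h3
    rcases Nat.eq_zero_or_pos q with rfl | hq0
    · simp at hq; omega
    · have := Nat.le_mul_of_pos_right d hq0
      omega
  have hzu : z ∈ (Finset.univ : Finset (Fin n)) := Finset.mem_univ z
  -- Shorten one longest word by a letter; its term in `T` grows from `1` to `d`.
  let m' := Function.update m z (L - 1)
  have hm'z : m' z = L - 1 := by simp [m']
  have hm'ne : ∀ i ∈ Finset.univ.erase z, m' i = m i := fun i hi => by
    simp [m', Finset.ne_of_mem_erase hi]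
  have hm'le : ∀ i, m' i ≤ m i := fun i => by
    by_cases h : i = z
    · subst h; rw [hm'z]; omega
    · exact (hm'ne i (by simp [h])).le
  have hm'sum : ∑ i, m' i < N := by
    rw [← hmN]
    exact Finset.sum_lt_sum (fun i _ => hm'le i) ⟨z, hzu, by rw [hm'z]; omega⟩
  have hm'K : ∑ i, (1 / (d : ℝ)) ^ m' i ≤ 1 := by
    rw [kraft_iff (by omega : 0 < d) Finset.univ m' L (fun i _ => (hm'le i).trans (hz i))]
    rw [← Finset.add_sum_erase _ _ hzu] at hroom ⊢
    rw [Finset.sum_congr rfl fun i hi => by rw [hm'ne i hi], hm'z, Nat.sub_sub_self hL]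
    simp only [← hLdef, Nat.sub_self, pow_zero, pow_one] at hroom ⊢
    omega
  obtain ⟨l', L', h1, h2, h3, h4, h5⟩ := ih _ hm'sum m' rfl hm'K
  refine ⟨l', L', h1, h2, h3, h4, (h5.trans ?_).trans hcost⟩
  gcongr with i
  exact hm'le i

/-! ### Expanding the merged leaf -/

/-- Inductive step of the generalized Huffman algorithm for the Huffman (α) weighting:
expanding, in an α-optimal tree for `{b, a k, …, a (n-1)}` with `b = a 0 + ⋯ + a (k-1)`,
the leaf `y` of weight `b` into `k` children with weights `a 0, …, a (k-1)` yields an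
α-optimal tree for `{a 0, …, a (n-1)}`. -/
theorem stmt_16 {d : ℕ} (hd : 2 ≤ d) (n k : ℕ)
    (hk2 : 2 ≤ k) (hkd : k ≤ d) (hkn : k < n) (hkmod : k ≡ n [MOD d - 1])
    (a : Fin n → ℝ≥0) (ha : Monotone a)
    (b : ℝ≥0) (hb : b = ∑ i ∈ Finset.univ.filter (fun i : Fin n => (i : ℕ) < k), a i)
    (D : Finset (List (Fin d))) (hD : IsPrefixCode (↑D : Set (List (Fin d))))
    (s : List (Fin d) → ℝ≥0)
    -- the multiset of labels of `(D, s)` is `{b, a k, …, a (n-1)}`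
    (hlabels : D.val.map s =
      b ::ₘ (Finset.univ.filter (fun i : Fin n => k ≤ (i : ℕ))).val.map a)
    -- `(D, s)` is α-optimal
    (hDopt : ∀ (D' : Finset (List (Fin d))) (s' : List (Fin d) → ℝ≥0)
        (f : List (Fin d) → List (Fin d)),
      IsPrefixCode (↑D' : Set (List (Fin d))) →
      Set.InjOn f ↑D → D' = D.image f → (∀ x ∈ D, s x = s' (f x)) →
      ∑ x ∈ D, (x.length : ℝ≥0) * s x ≤ ∑ x ∈ D', (x.length : ℝ≥0) * s' x)
    (y : List (Fin d)) (hy : y ∈ D) (hsy : s y = b)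
    (C : Finset (List (Fin d)))
    (hCdef : C = D.erase y ∪
      (Finset.univ : Finset (Fin k)).image (fun i => y ++ [Fin.castLE hkd i]))
    (r : List (Fin d) → ℝ≥0)
    (hr1 : ∀ i : Fin k, r (y ++ [Fin.castLE hkd i]) = a (Fin.castLE hkn.le i))
    (hr2 : ∀ z ∈ D, z ≠ y → r z = s z) :
    IsPrefixCode (↑C : Set (List (Fin d))) ∧
    -- the multiset of labels of `(C, r)` is `{a 0, …, a (n-1)}`
    C.val.map r = (Finset.univ : Finset (Fin n)).val.map a ∧
    -- `(C, r)` is α-optimal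
    (∀ (D' : Finset (List (Fin d))) (s' : List (Fin d) → ℝ≥0)
        (f : List (Fin d) → List (Fin d)),
      IsPrefixCode (↑D' : Set (List (Fin d))) →
      Set.InjOn f ↑C → D' = C.image f → (∀ x ∈ C, r x = s' (f x)) →
      ∑ x ∈ C, (x.length : ℝ≥0) * r x ≤ ∑ x ∈ D', (x.length : ℝ≥0) * s' x) := by
  classical
  let U : Finset (List (Fin d)) :=
    (Finset.univ : Finset (Fin k)).image (fun i => y ++ [Fin.castLE hkd i])
  have hchild : Function.Injective (fun i : Fin k => y ++ [Fin.castLE hkd i]) := by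
    intro i j h
    simpa using h
  -- A proper extension of `y` is not in `D`, since `y` is.
  have hnot : ∀ z ∈ D, ∀ i : Fin k, ¬ y ++ [Fin.castLE hkd i] <+: z := by
    intro z hz i h
    have hyz : y = z := hD y hy z hz ((List.prefix_append _ _).trans h)
    subst hyz
    simpa using h.length_le
  have hdisj : Disjoint (D.erase y) U := by
    rw [Finset.disjoint_left]
    intro z hz hzU
    obtain ⟨i, _, rfl⟩ := Finset.mem_image.1 hzU
    exact hnot _ (Finset.mem_of_mem_erase hz) i List.prefix_rfl
  have hCU : C = D.erase y ∪ U := hCdef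
  have hCcode : IsPrefixCode (↑C : Set (List (Fin d))) := by
    intro x hx z hz hxz
    rw [hCU, Finset.mem_coe, Finset.mem_union] at hx hz
    rcases hx with hx | hx <;> rcases hz with hz | hz
    · exact hD x (Finset.mem_of_mem_erase hx) z (Finset.mem_of_mem_erase hz) hxz
    · obtain ⟨i, _, rfl⟩ := Finset.mem_image.1 hz
      rcases List.prefix_concat_iff.1 hxz with h | h
      · exact h
      · exact absurd (hD x (Finset.mem_of_mem_erase hx) y hy h) (Finset.ne_of_mem_erase hx)
    · obtain ⟨i, _, rfl⟩ := Finset.mem_image.1 hx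
      exact absurd hxz (hnot z (Finset.mem_of_mem_erase hz) i)
    · obtain ⟨i, _, rfl⟩ := Finset.mem_image.1 hx
      obtain ⟨j, _, rfl⟩ := Finset.mem_image.1 hz
      exact hxz.eq_of_length (by simp)
  have hlow : (Finset.univ.filter (fun i : Fin n => (i : ℕ) < k)) =
      (Finset.univ : Finset (Fin k)).map (Fin.castLEEmb hkn.le) := by
    ext i
    simp only [Finset.mem_filter, Finset.mem_univ, true_and, Finset.mem_map]
    exact ⟨fun h => ⟨⟨i, h⟩, rfl⟩, fun ⟨j, hj⟩ => hj ▸ j.2⟩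
  have hhigh : (Finset.univ.filter (fun i : Fin n => ¬ (i : ℕ) < k)) =
      Finset.univ.filter (fun i : Fin n => k ≤ (i : ℕ)) := by
    simp only [not_lt]
  have hDerase : (D.erase y).val.map r =
      (Finset.univ.filter (fun i : Fin n => k ≤ (i : ℕ))).val.map a := by
    have h1 : (D.erase y).val.map r = (D.erase y).val.map s :=
      Multiset.map_congr rfl fun z hz =>
        hr2 z (Finset.mem_of_mem_erase hz) (Finset.ne_of_mem_erase hz)
    rw [h1]
    rw [← Finset.insert_erase hy, Finset.insert_val_of_notMem (Finset.notMem_erase y D),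
      Multiset.map_cons, hsy] at hlabels
    exact (Multiset.cons_inj_right b).1 hlabels
  have hClabels : C.val.map r = (Finset.univ : Finset (Fin n)).val.map a := by
    rw [hCU, ← Finset.disjUnion_eq_union _ _ hdisj, Finset.disjUnion_val, Multiset.map_add, hDerase]
    have hu : (Finset.univ : Finset (Fin n)).val =
        (Finset.univ.filter (fun i : Fin n => (i : ℕ) < k)).val +
          (Finset.univ.filter (fun i : Fin n => ¬ (i : ℕ) < k)).val :=
      (Multiset.filter_add_not _ _).symm
    rw [hu, Multiset.map_add, hhigh, add_comm, hlow, Finset.map_val]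
    congr 1
    rw [Finset.image_val_of_injOn hchild.injOn, Multiset.map_map, Multiset.map_map]
    exact Multiset.map_congr rfl fun i _ => hr1 i
  refine ⟨hCcode, hClabels, ?_⟩
  have hb' : b = ∑ i : Fin k, a (Fin.castLE hkn.le i) := by
    rw [hb, hlow, Finset.sum_map]
    rfl
  have hCcost : ∑ x ∈ C, (x.length : ℝ≥0) * r x = ∑ x ∈ D, (x.length : ℝ≥0) * s x + b := by
    rw [hCU, Finset.sum_union hdisj, Finset.sum_image hchild.injOn,
      ← Finset.sum_erase_add D _ hy, add_assoc]
    congr 1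
    · exact Finset.sum_congr rfl fun z hz => by
        rw [hr2 z (Finset.mem_of_mem_erase hz) (Finset.ne_of_mem_erase hz)]
    · simp only [hr1, List.length_append, List.length_singleton]
      rw [← Finset.mul_sum, ← hb', hsy]
      push_cast
      ring
  intro D' s' f hD' hf hD'eq hs'
  obtain ⟨e, he⟩ := exists_equiv_of_labels C r a hClabels
  -- The competitor `(D', s')` enters only through its codeword lengths `l`, indexed by `Fin n`.
  let l : Fin n → ℕ := fun i => (f (e.symm i)).length
  have hreindex : ∀ {M : Type} [AddCommMonoid M] (g : List (Fin d) → M),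
      ∑ x ∈ D', g x = ∑ i, g (f (e.symm i)) := by
    intro M _ g
    rw [hD'eq, Finset.sum_image hf, ← Finset.sum_coe_sort C, ← Equiv.sum_comp e.symm]
  have hlK : ∑ i, (1 / (d : ℝ)) ^ l i ≤ 1 := by
    have := kraft_of_prefixCode hd D' hD'
    rwa [hreindex] at this
  have hlcost : ∑ x ∈ D', (x.length : ℝ≥0) * s' x = ∑ i, (l i : ℝ≥0) * a i := by
    rw [hreindex]
    refine Finset.sum_congr rfl fun i _ => ?_
    rw [← hs' _ (e.symm i).2, ← he, e.apply_symm_apply]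
  obtain ⟨l', L, hl'L, hl'k, hL, hslack, hcost⟩ :=
    exists_balanced hd n k hk2 hkd hkn hkmod a ha _ l rfl hlK
  -- Merge the `k` words of length `L` carrying the smallest labels into one of length `L - 1`.
  let c : Option {i : Fin n // k ≤ (i : ℕ)} → ℝ≥0 := fun o => o.elim b fun i => a i
  let p : Option {i : Fin n // k ≤ (i : ℕ)} → ℕ := fun o => o.elim (L - 1) fun i => l' i
  have hcl : D.val.map s =
      (Finset.univ : Finset (Option {i : Fin n // k ≤ (i : ℕ)})).val.map c := by
    rw [hlabels, ← Finset.univ_val_map_subtype_restrict]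
    rw [univ_option]
    simp [c, Finset.insertNone, Function.comp_def]
  have hsplit : ∀ {M : Type} [AddCommMonoid M] (g : Fin n → M),
      ∑ i, g i = ∑ i ∈ Finset.univ.filter (fun i : Fin n => (i : ℕ) < k), g i +
        ∑ i : {i : Fin n // k ≤ (i : ℕ)}, g i := by
    intro M _ g
    rw [← Finset.sum_filter_add_sum_filter_not Finset.univ (fun i : Fin n => (i : ℕ) < k), hhigh]
    congr 1
    exact Finset.sum_subtype _ (by simp) g
  have hpK : ∑ o, (1 / (d : ℝ)) ^ p o ≤ 1 := by
    rw [kraft_iff (by omega : 0 < d) Finset.univ p L]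
    · rw [Fintype.sum_option]
      rw [hsplit, Finset.sum_congr rfl fun i hi => by rw [hl'k i (Finset.mem_filter.1 hi).2],
        hlow] at hslack
      simp only [Nat.sub_self, pow_zero, Finset.sum_const, Finset.card_map, Finset.card_univ,
        Fintype.card_fin, smul_eq_mul, mul_one] at hslack
      simp only [p, Option.elim_none, Option.elim_some, Nat.sub_sub_self hL, pow_one]
      omega
    · rintro (_ | i) _
      · exact Nat.sub_le _ _
      · exact hl'L i
  have hpcost : ∑ o, (p o : ℝ≥0) * c o + b = ∑ i, (l' i : ℝ≥0) * a i := by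
    have hfirst : ∑ i ∈ Finset.univ.filter (fun i : Fin n => (i : ℕ) < k), (l' i : ℝ≥0) * a i =
        (L : ℝ≥0) * b := by
      rw [hb, Finset.mul_sum]
      exact Finset.sum_congr rfl fun i hi => by rw [hl'k i (Finset.mem_filter.1 hi).2]
    rw [Fintype.sum_option, hsplit, hfirst]
    simp only [p, c, Option.elim_none, Option.elim_some]
    obtain ⟨M, rfl⟩ : ∃ M, L = M + 1 := ⟨L - 1, by omega⟩
    push_cast [Nat.add_sub_cancel]
    ring
  rw [hCcost, hlcost]
  calc ∑ x ∈ D, (x.length : ℝ≥0) * s x + b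
      ≤ ∑ o, (p o : ℝ≥0) * c o + b := by
        gcongr
        exact optimal_le_of_kraft hd c D s hcl hDopt p hpK
    _ = ∑ i, (l' i : ℝ≥0) * a i := hpcost
    _ ≤ ∑ i, (l i : ℝ≥0) * a i := hcost
end

section
/- Let d ≥ 2, let n > k where 2 ≤ k ≤ d and k ≡ n (mod d−1), and let a_0 ≤ a_1 ≤ ⋯ ≤ a_{n−1} be natural numbers. Let b = 1 + a_{k−1} (the maximum of the k smallest weights plus one). Suppose (D, s) is a finite prefix code over Fin d with labeling s : D → ℕ whose multiset of labels is {b, a_k, …, a_{n−1}}, suppose (D, s) is w-optimal (i.e., max_{x ∈ D} (|x| + s(x)) ≤ max_{x ∈ D′} (|x| + s′(x)) for every labeled finite prefix code (D′, s′) over Fin d admitting a bijection f : D → D′ with s = s′ ∘ f), and let y ∈ D with s(y) = b. Define C = (D \ {y}) ∪ {y ++ [i] : i < k} and r : C → ℕ by r(y ++ [i]) = a_i for i < k and r(z) = s(z) for z ∈ D \ {y}. Then C is a finite prefix code, the multiset of labels of (C, r) is {a_0, …, a_{n−1}}, and (C, r) is w-optimal. -/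
/-- The words of length `T` that extend `x`, for `|x| ≤ T` (for `|x| > T` this is `{x}`). -/
def wordExtensions {d : ℕ} (x : List (Fin d)) (T : ℕ) : Finset (List (Fin d)) :=
  (Finset.univ : Finset (List.Vector (Fin d) (T - x.length))).image fun v => x ++ v.toList

lemma card_wordExtensions {d : ℕ} (x : List (Fin d)) (T : ℕ) :
    (wordExtensions x T).card = d ^ (T - x.length) := by
  unfold wordExtensions
  rw [Finset.card_image_of_injective]
  · simp [card_vector]
  · intro v w h
    exact Subtype.ext (List.append_cancel_left h)

lemma mem_wordExtensions {d : ℕ} {x w : List (Fin d)} {T : ℕ} (hx : x.length ≤ T) :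
    w ∈ wordExtensions x T ↔ x <+: w ∧ w.length = T := by
  unfold wordExtensions
  simp only [Finset.mem_image, Finset.mem_univ, true_and]
  constructor
  · rintro ⟨v, rfl⟩
    refine ⟨List.prefix_append _ _, ?_⟩
    simp only [List.length_append, List.Vector.toList_length]
    omega
  · rintro ⟨⟨t, rfl⟩, h⟩
    refine ⟨⟨t, ?_⟩, rfl⟩
    simp only [List.length_append] at h
    omega

/-- Kraft's inequality for prefix codes with words of length at most `T`, multiplied by `d ^ T`:
distinct code words have disjoint sets of extensions of length `T`. -/
lemma kraft_le_s17 {d : ℕ} (E : Finset (List (Fin d))) (hE : IsPrefixCode (↑E : Set (List (Fin d))))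
    (T : ℕ) (hT : ∀ x ∈ E, x.length ≤ T) :
    ∑ x ∈ E, d ^ (T - x.length) ≤ d ^ T := by
  have hdisj : (E : Set (List (Fin d))).PairwiseDisjoint fun x => wordExtensions x T := by
    intro x hx z hz hne
    refine Finset.disjoint_left.2 fun w hw hw' => hne ?_
    rw [mem_wordExtensions (hT x hx)] at hw
    rw [mem_wordExtensions (hT z hz)] at hw'
    rcases List.prefix_or_prefix_of_prefix hw.1 hw'.1 with h | h
    · exact hE x hx z hz h
    · exact (hE z hz x hx h).symm
  calc ∑ x ∈ E, d ^ (T - x.length) = (E.biUnion fun x => wordExtensions x T).card := by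
        rw [Finset.card_biUnion hdisj]
        simp [card_wordExtensions]
    _ ≤ (wordExtensions ([] : List (Fin d)) T).card := by
        refine Finset.card_le_card fun w hw => ?_
        obtain ⟨x, hx, hw⟩ := Finset.mem_biUnion.1 hw
        rw [mem_wordExtensions (hT x hx)] at hw
        rw [mem_wordExtensions (Nat.zero_le _)]
        exact ⟨List.nil_prefix, hw.2⟩
    _ = d ^ T := by simp [card_wordExtensions]

/-- Converse of Kraft's inequality. Words are chosen in order of increasing length; a word of
the required length extending none of the earlier ones exists by counting. -/
lemma exists_code_of_lengths {d : ℕ} (hd : 0 < d) {ι : Type*} [DecidableEq ι]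
    (T : ℕ) (l : ι → ℕ) (A : Finset ι) :
    (∀ i ∈ A, l i ≤ T) → ∑ i ∈ A, d ^ (T - l i) ≤ d ^ T →
    ∃ f : ι → List (Fin d), Set.InjOn f ↑A ∧
      IsPrefixCode (↑(A.image f) : Set (List (Fin d))) ∧ ∀ i ∈ A, (f i).length = l i := by
  induction A using Finset.induction_on_max_value l with
  | empty =>
    intro _ _
    exact ⟨fun _ => [], by simp, by simp [IsPrefixCode], by simp⟩
  | insert i A hi hmax ih =>
    intro hl hsum
    rw [Finset.sum_insert hi] at hsum
    obtain ⟨f, hinj, hpre, hlen⟩ := ih (fun j hj => hl j (Finset.mem_insert_of_mem hj)) (by omega)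
    have hiT : l i ≤ T := hl i (Finset.mem_insert_self _ _)
    obtain ⟨w, hwl, hw⟩ : ∃ w : List (Fin d), w.length = l i ∧ ∀ j ∈ A, ¬ f j <+: w := by
      by_contra! hcon
      have hsub : wordExtensions ([] : List (Fin d)) (l i) ⊆
          A.biUnion fun j => wordExtensions (f j) (l i) := by
        intro w hw
        rw [mem_wordExtensions (Nat.zero_le _)] at hw
        obtain ⟨j, hj, hp⟩ := hcon w hw.2
        refine Finset.mem_biUnion.2 ⟨j, hj, ?_⟩
        rw [mem_wordExtensions (by rw [hlen j hj]; exact hmax j hj)]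
        exact ⟨hp, hw.2⟩
      have h1 : d ^ l i ≤ ∑ j ∈ A, d ^ (l i - l j) := by
        have h := (Finset.card_le_card hsub).trans Finset.card_biUnion_le
        simp only [card_wordExtensions, List.length_nil, Nat.sub_zero] at h
        refine h.trans (Finset.sum_le_sum fun j hj => ?_)
        rw [hlen j hj]
      have h2 : d ^ T ≤ ∑ j ∈ A, d ^ (T - l j) := by
        calc d ^ T = d ^ (T - l i) * d ^ l i := by rw [← pow_add]; congr 1; omega
          _ ≤ d ^ (T - l i) * ∑ j ∈ A, d ^ (l i - l j) := Nat.mul_le_mul_left _ h1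
          _ = ∑ j ∈ A, d ^ (T - l j) := by
            rw [Finset.mul_sum]
            refine Finset.sum_congr rfl fun j hj => ?_
            have := hmax j hj
            rw [← pow_add]; congr 1; omega
      have h3 : 0 < d ^ (T - l i) := pow_pos hd _
      omega
    have hw' : ∀ j ∈ A, ¬ w <+: f j := by
      intro j hj hp
      have h1 := hmax j hj
      have h2 := hlen j hj
      have h3 := hp.length_le
      have h4 : w = f j := hp.eq_of_length (by omega)
      exact hw j hj (h4 ▸ List.prefix_rfl)
    have hupd : ∀ j ∈ A, Function.update f i w j = f j := fun j hj =>
      Function.update_of_ne (by rintro rfl; exact hi hj) _ _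
    refine ⟨Function.update f i w, ?_, ?_, ?_⟩
    · intro p hp q hq h
      simp only [Finset.coe_insert, Set.mem_insert_iff, Finset.mem_coe] at hp hq
      rcases hp with rfl | hp <;> rcases hq with rfl | hq
      · rfl
      · rw [hupd q hq, Function.update_self] at h
        exact (hw q hq (h ▸ List.prefix_rfl)).elim
      · rw [hupd p hp, Function.update_self] at h
        exact (hw p hp (h ▸ List.prefix_rfl)).elim
      · rw [hupd p hp, hupd q hq] at h
        exact hinj hp hq h
    · intro p hp q hq h
      simp only [Finset.coe_image, Finset.coe_insert, Set.mem_image, Set.mem_insert_iff,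
        Finset.mem_coe] at hp hq
      obtain ⟨p, hp, rfl⟩ := hp
      obtain ⟨q, hq, rfl⟩ := hq
      rcases hp with rfl | hp <;> rcases hq with rfl | hq
      · rfl
      · rw [hupd q hq, Function.update_self] at h
        exact (hw' q hq h).elim
      · rw [hupd p hp, Function.update_self] at h
        exact (hw p hp h).elim
      · rw [hupd p hp, hupd q hq] at h ⊢
        exact hpre _ (by simpa using ⟨p, hp, rfl⟩) _ (by simpa using ⟨q, hq, rfl⟩) h
    · intro j hj
      rcases Finset.mem_insert.1 hj with rfl | hj
      · simpa using hwl
      · rw [hupd j hj]; exact hlen j hj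

/-- Kraft's criterion in terms of labels, with word lengths `T - s x`. -/
lemma exists_code {d : ℕ} (hd : 2 ≤ d) {ι : Type*} [DecidableEq ι] (T : ℕ) (s : ι → ℕ)
    (A : Finset ι) (hsum : ∑ x ∈ A, d ^ s x ≤ d ^ T) :
    ∃ f : ι → List (Fin d), Set.InjOn f ↑A ∧
      IsPrefixCode (↑(A.image f) : Set (List (Fin d))) ∧ ∀ x ∈ A, (f x).length + s x = T := by
  have hle : ∀ x ∈ A, s x ≤ T := fun x hx =>
    (Nat.pow_le_pow_iff_right (by omega)).1
      ((Finset.single_le_sum (f := fun x => d ^ s x) (fun _ _ => Nat.zero_le _) hx).trans hsum)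
  obtain ⟨f, h1, h2, h3⟩ := exists_code_of_lengths (by omega : 0 < d) T (fun x => T - s x) A
    (fun _ _ => Nat.sub_le _ _) (by
      refine le_of_eq_of_le (Finset.sum_congr rfl fun x hx => ?_) hsum
      have := hle x hx
      congr 1; omega)
  refine ⟨f, h1, h2, fun x hx => ?_⟩
  have := hle x hx
  have := h3 x hx
  omega

/-- The slack `d ^ T - ∑_{i ∈ B} d ^ a i` is a multiple of `d ^ m` whose cofactor is `1`
modulo `d - 1`; so as soon as it exceeds `d ^ m` it is at least `d ^ (m + 1)`. -/
lemma kraft_sum_merge {ι : Type*} {d : ℕ} (hd : 2 ≤ d) (B : Finset ι) (a : ι → ℕ) (m T P : ℕ)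
    (hB : ∀ i ∈ B, m ≤ a i) (hcard : d - 1 ∣ B.card) (hP : d ^ m < P)
    (h : P + ∑ i ∈ B, d ^ a i ≤ d ^ T) :
    d ^ (1 + m) + ∑ i ∈ B, d ^ a i ≤ d ^ T := by
  have hpos : 0 < d ^ m := pow_pos (by omega) _
  have hmT : m ≤ T :=
    (Nat.pow_le_pow_iff_right (by omega : 1 < d)).1 (by omega)
  have hone : ∀ e, d ^ e ≡ 1 [MOD d - 1] := fun e => by
    have h1 : d ≡ 1 [MOD d - 1] := ((Nat.modEq_iff_dvd' (by omega)).2 dvd_rfl).symm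
    simpa using h1.pow e
  set S := ∑ i ∈ B, d ^ (a i - m) with hS
  have hsum : ∑ i ∈ B, d ^ a i = d ^ m * S := by
    rw [hS, Finset.mul_sum]
    refine Finset.sum_congr rfl fun i hi => ?_
    have := hB i hi
    rw [← pow_add]; congr 1; omega
  have hTm : d ^ T = d ^ m * d ^ (T - m) := by rw [← pow_add]; congr 1; omega
  have hSmod : d - 1 ∣ S := by
    have h1 : S ≡ ∑ i ∈ B, 1 [MOD d - 1] := by
      rw [hS]
      exact Nat.ModEq.sum fun i _ => hone _
    rw [Finset.sum_const, smul_eq_mul, mul_one] at h1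
    exact (h1.dvd_iff dvd_rfl).2 hcard
  rw [hsum, hTm] at h ⊢
  have hlt : 1 + S < d ^ (T - m) := by
    refine Nat.lt_of_mul_lt_mul_left (a := d ^ m) ?_
    rw [mul_add, mul_one]
    omega
  have hdvd : d - 1 ∣ d ^ (T - m) - (1 + S) := by
    have h1 : 1 + S ≡ d ^ (T - m) [MOD d - 1] :=
      (((Nat.modEq_zero_iff_dvd.2 hSmod).add_left 1)).trans (hone _).symm
    exact (Nat.modEq_iff_dvd' hlt.le).1 h1
  have hge := Nat.le_of_dvd (by omega) hdvd
  have hfin : d + S ≤ d ^ (T - m) := by omega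
  calc d ^ (1 + m) + d ^ m * S = d ^ m * (d + S) := by ring
    _ ≤ _ := Nat.mul_le_mul_left _ hfin

/-- Inductive step of the generalized Huffman algorithm for the PIFO (max-plus)
weighting: expanding, in a w-optimal tree for `{b, a k, …, a (n-1)}` with
`b = 1 + a (k-1)`, the leaf `y` of weight `b` into `k` children with weights
`a 0, …, a (k-1)` yields a w-optimal tree for `{a 0, …, a (n-1)}`. -/
theorem stmt_17 {d : ℕ} (hd : 2 ≤ d) (n k : ℕ)
    (hk2 : 2 ≤ k) (hkd : k ≤ d) (hkn : k < n) (hkmod : k ≡ n [MOD d - 1])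
    (a : Fin n → ℕ) (ha : Monotone a)
    (b : ℕ) (hb : b = 1 + a (Fin.castLE hkn.le ⟨k - 1, by omega⟩))
    (D : Finset (List (Fin d))) (hD : IsPrefixCode (↑D : Set (List (Fin d))))
    (s : List (Fin d) → ℕ)
    -- the multiset of labels of `(D, s)` is `{b, a k, …, a (n-1)}`
    (hlabels : D.val.map s =
      b ::ₘ (Finset.univ.filter (fun i : Fin n => k ≤ (i : ℕ))).val.map a)
    -- `(D, s)` is w-optimal
    (hDopt : ∀ (D' : Finset (List (Fin d))) (s' : List (Fin d) → ℕ)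
        (f : List (Fin d) → List (Fin d)),
      IsPrefixCode (↑D' : Set (List (Fin d))) →
      Set.InjOn f ↑D → D' = D.image f → (∀ x ∈ D, s x = s' (f x)) →
      (D.sup fun x => x.length + s x) ≤ D'.sup fun x => x.length + s' x)
    (y : List (Fin d)) (hy : y ∈ D) (hsy : s y = b)
    (C : Finset (List (Fin d)))
    (hCdef : C = D.erase y ∪
      (Finset.univ : Finset (Fin k)).image (fun i => y ++ [Fin.castLE hkd i]))
    (r : List (Fin d) → ℕ)
    (hr1 : ∀ i : Fin k, r (y ++ [Fin.castLE hkd i]) = a (Fin.castLE hkn.le i))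
    (hr2 : ∀ z ∈ D, z ≠ y → r z = s z) :
    IsPrefixCode (↑C : Set (List (Fin d))) ∧
    -- the multiset of labels of `(C, r)` is `{a 0, …, a (n-1)}`
    C.val.map r = (Finset.univ : Finset (Fin n)).val.map a ∧
    -- `(C, r)` is w-optimal
    (∀ (D' : Finset (List (Fin d))) (s' : List (Fin d) → ℕ)
        (f : List (Fin d) → List (Fin d)),
      IsPrefixCode (↑D' : Set (List (Fin d))) →
      Set.InjOn f ↑C → D' = C.image f → (∀ x ∈ C, r x = s' (f x)) →
      (C.sup fun x => x.length + r x) ≤ D'.sup fun x => x.length + s' x) := by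
  classical
  set m := a (Fin.castLE hkn.le ⟨k - 1, by omega⟩) with hm
  set B := Finset.univ.filter (fun i : Fin n => k ≤ (i : ℕ)) with hB
  set K := (Finset.univ : Finset (Fin k)).image (fun i => y ++ [Fin.castLE hkd i]) with hK
  have hKinj : Function.Injective (fun i : Fin k => y ++ [Fin.castLE hkd i]) := by
    intro i j h
    simpa using h
  have hdisj : Disjoint (D.erase y) K := by
    refine Finset.disjoint_left.2 fun z hz hzK => ?_
    obtain ⟨i, -, rfl⟩ := Finset.mem_image.1 hzK
    obtain ⟨hne, hzD⟩ := Finset.mem_erase.1 hz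
    exact hne (hD y hy _ hzD (List.prefix_append _ _)).symm
  have hprefix : IsPrefixCode (↑C : Set (List (Fin d))) := by
    intro p hp q hq hpq
    rw [hCdef, Finset.mem_coe, Finset.mem_union] at hp hq
    rcases hp with hp | hp <;> rcases hq with hq | hq
    · exact hD p (Finset.mem_of_mem_erase hp) q (Finset.mem_of_mem_erase hq) hpq
    · obtain ⟨i, -, rfl⟩ := Finset.mem_image.1 hq
      obtain ⟨hne, hpD⟩ := Finset.mem_erase.1 hp
      rcases List.prefix_concat_iff.1 hpq with h | h
      · exact h
      · exact (hne (hD p hpD y hy h)).elim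
    · obtain ⟨i, -, rfl⟩ := Finset.mem_image.1 hp
      obtain ⟨hne, hqD⟩ := Finset.mem_erase.1 hq
      exact (hne (hD y hy q hqD ((List.prefix_append _ _).trans hpq)).symm).elim
    · obtain ⟨i, -, rfl⟩ := Finset.mem_image.1 hp
      obtain ⟨j, -, rfl⟩ := Finset.mem_image.1 hq
      exact hpq.eq_of_length (by simp)
  have herase : (D.erase y).val.map r = B.val.map a := by
    have h1 : D.val = y ::ₘ (D.erase y).val := by
      rw [Finset.erase_val, Multiset.cons_erase hy]
    rw [h1, Multiset.map_cons, hsy, Multiset.cons_inj_right] at hlabels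
    rw [← hlabels]
    refine Multiset.map_congr rfl fun z hz => ?_
    obtain ⟨hne, hzD⟩ := Finset.mem_erase.1 hz
    exact hr2 z hzD hne
  set A := (Finset.univ : Finset (Fin k)).map (Fin.castLEEmb hkn.le) with hA
  have hAB : Disjoint A B := by
    refine Finset.disjoint_left.2 fun z hz hzB => ?_
    obtain ⟨i, -, rfl⟩ := Finset.mem_map.1 hz
    have h : k ≤ (i : ℕ) := (Finset.mem_filter.1 hzB).2
    omega
  have huniv : (Finset.univ : Finset (Fin n)) = A.disjUnion B hAB := by
    ext z
    simp only [Finset.mem_univ, Finset.disjUnion_eq_union, Finset.mem_union, true_iff]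
    by_cases hz : k ≤ (z : ℕ)
    · exact Or.inr (Finset.mem_filter.2 ⟨Finset.mem_univ _, hz⟩)
    · exact Or.inl (Finset.mem_map.2 ⟨⟨z, by omega⟩, Finset.mem_univ _, rfl⟩)
  have hClabels : C.val.map r = (Finset.univ : Finset (Fin n)).val.map a := by
    have hKlabels : K.val.map r = A.val.map a := by
      rw [hK, Finset.image_val_of_injOn hKinj.injOn, hA, Finset.map_val, Multiset.map_map,
        Multiset.map_map]
      exact Multiset.map_congr rfl fun i _ => hr1 i
    rw [hCdef, ← Finset.disjUnion_eq_union _ _ hdisj, huniv, Finset.disjUnion_val,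
      Finset.disjUnion_val, Multiset.map_add, Multiset.map_add, herase, hKlabels, add_comm]
  refine ⟨hprefix, hClabels, ?_⟩
  intro D' s' f hD' hf hD'eq hs'
  set T := D'.sup fun x => x.length + s' x with hT
  have hcost : ∀ x ∈ D', x.length + s' x ≤ T := fun x hx =>
    Finset.le_sup (f := fun x => x.length + s' x) hx
  have hCsum : ∑ i, d ^ a i ≤ d ^ T := by
    calc ∑ i, d ^ a i = ∑ x ∈ C, d ^ r x := by
          have := congrArg (fun M => (M.map (d ^ ·)).sum) hClabels
          simp only [Multiset.map_map, Function.comp_def] at this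
          exact this.symm
      _ = ∑ x ∈ D', d ^ s' x := by
          rw [hD'eq, Finset.sum_image hf]
          exact Finset.sum_congr rfl fun x hx => by rw [hs' x hx]
      _ ≤ ∑ x ∈ D', d ^ (T - x.length) := by
          refine Finset.sum_le_sum fun x hx => Nat.pow_le_pow_right (by omega) ?_
          have := hcost x hx
          omega
      _ ≤ d ^ T := kraft_le_s17 D' hD' T fun x hx => by
          have := hcost x hx
          omega
  have hDsum : ∑ x ∈ D, d ^ s x ≤ d ^ T := by
    have h1 : ∑ x ∈ D, d ^ s x = d ^ b + ∑ i ∈ B, d ^ a i := by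
      have := congrArg (fun M => (M.map (d ^ ·)).sum) hlabels
      simp only [Multiset.map_map, Function.comp_def, Multiset.map_cons, Multiset.sum_cons] at this
      exact this
    rw [h1, hb]
    rw [huniv, Finset.sum_disjUnion] at hCsum
    refine kraft_sum_merge hd B a m T _ ?_ ?_ ?_ hCsum
    · intro i hi
      refine ha ?_
      have := (Finset.mem_filter.1 hi).2
      rw [Fin.le_def]
      simp
      omega
    · have h2 := congrArg Finset.card huniv
      rw [Finset.card_disjUnion, hA, Finset.card_map, Finset.card_univ, Finset.card_univ,
        Fintype.card_fin, Fintype.card_fin] at h2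
      have h3 := (Nat.modEq_iff_dvd' hkn.le).1 hkmod
      rwa [h2, Nat.add_sub_cancel_left] at h3
    · rw [hA, Finset.sum_map]
      -- `k ≥ 2` provides the index `0 ≠ k - 1`, whose term is positive.
      refine Finset.single_lt_sum (f := fun i : Fin k => d ^ a (Fin.castLEEmb hkn.le i))
        (i := ⟨k - 1, by omega⟩) (j := ⟨0, by omega⟩) ?_ (Finset.mem_univ _)
        (Finset.mem_univ _) (pow_pos (by omega) _) fun _ _ _ => Nat.zero_le _
      simp only [ne_eq, Fin.mk.injEq]
      omega
  obtain ⟨g, hginj, hgpre, hglen⟩ := exists_code hd T s D hDsum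
  have hDT : (D.sup fun x => x.length + s x) ≤ T := by
    have hinv : ∀ x ∈ D, Function.invFunOn g ↑D (g x) = x := fun x hx =>
      hginj.leftInvOn_invFunOn hx
    refine (hDopt (D.image g) (fun w => s (Function.invFunOn g ↑D w)) g hgpre hginj rfl
      fun x hx => by rw [hinv x hx]).trans ?_
    refine Finset.sup_le fun w hw => ?_
    obtain ⟨x, hx, rfl⟩ := Finset.mem_image.1 hw
    rw [hinv x hx]
    exact (hglen x hx).le
  refine Finset.sup_le fun x hx => ?_
  have hle : ∀ z ∈ D, z.length + s z ≤ T := fun z hz =>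
    (Finset.le_sup (f := fun x => x.length + s x) hz).trans hDT
  rw [hCdef, Finset.mem_union] at hx
  rcases hx with hx | hx
  · obtain ⟨hne, hxD⟩ := Finset.mem_erase.1 hx
    rw [hr2 x hxD hne]
    exact hle x hxD
  · obtain ⟨i, -, rfl⟩ := Finset.mem_image.1 hx
    have h1 := hle y hy
    have h2 : a (Fin.castLE hkn.le i) ≤ m := ha (by
      have := i.2
      rw [Fin.le_def]
      simp
      omega)
    rw [hr1 i, List.length_append, List.length_singleton]
    omega
end

section
/- Let d ≥ 2, let n ≥ 1, and let a_0, …, a_{n−1} be nonnegative reals. Then there exist a finite prefix code C over Fin d and a bijection g : Fin n → C with labeling r = (a ∘ g⁻¹) : C → ℝ≥0 such that for every finite prefix code D over Fin d with labeling s : D → ℝ≥0 for which there exists a bijection f : C → D with r = s ∘ f, one has α(C, r) ≤ α(D, s); that is, an α-optimal labeled prefix code exists for every finite multiset of nonnegative real weights. -/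
/-!
The cost of a labeled prefix code depends only on the vector of its word lengths in `Fin n → ℕ`,
and is monotone in that vector. By Dickson's lemma every set of such vectors is partially
well-ordered, so its image under the (monotone) cost function is a well-founded subset of `ℝ≥0`.
It is nonempty, since the words of length `n` with exactly one letter `1` and all others `0` form
a prefix code with `n` elements; hence the cost attains a minimum.
-/

open scoped NNReal

/-- An injective enumeration `g` of a prefix code with `n` words. -/
def IsCodeEnum {d n : ℕ} (g : Fin n → List (Fin d)) : Prop :=
  Function.Injective g ∧ IsPrefixCode (Set.range g)

lemma exists_isCodeEnum {d : ℕ} (hd : 2 ≤ d) (n : ℕ) :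
    ∃ g : Fin n → List (Fin d), IsCodeEnum g := by
  refine ⟨fun i => List.ofFn fun j : Fin n =>
    if j = i then (⟨1, by omega⟩ : Fin d) else ⟨0, by omega⟩, ?_, ?_⟩
  · intro i k h
    have := congrFun (List.ofFn_injective h) i
    by_contra hne
    simp [hne] at this
  · rintro _ ⟨i, rfl⟩ _ ⟨k, rfl⟩ h
    exact h.eq_of_length (by simp)

/-- Dickson's lemma gives an enumerated prefix code of minimal cost. -/
lemma exists_min_isCodeEnum {d : ℕ} (hd : 2 ≤ d) (n : ℕ) (a : Fin n → ℝ≥0) :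
    ∃ g : Fin n → List (Fin d), IsCodeEnum g ∧ ∀ h : Fin n → List (Fin d), IsCodeEnum h →
      ∑ i, ((g i).length : ℝ≥0) * a i ≤ ∑ i, ((h i).length : ℝ≥0) * a i := by
  let L : Set (Fin n → ℕ) := (fun g i => (g i).length) '' {g : Fin n → List (Fin d) | IsCodeEnum g}
  let φ : (Fin n → ℕ) → ℝ≥0 := fun l => ∑ i, (l i : ℝ≥0) * a i
  have hφ : Monotone φ := fun l m hlm => by
    refine Finset.sum_le_sum fun i _ => ?_
    gcongr
    exact hlm i
  have hwf : (φ '' L).IsWF := ((Set.isPWO_of_wellQuasiOrderedLE L).image_of_monotone hφ).isWF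
  obtain ⟨g₀, hg₀⟩ := exists_isCodeEnum hd n
  have hne : (φ '' L).Nonempty := ⟨_, _, ⟨g₀, hg₀, rfl⟩, rfl⟩
  obtain ⟨_, ⟨g, hg, rfl⟩, hmin⟩ := hwf.min_mem hne
  refine ⟨g, hg, fun h hh => ?_⟩
  have := hwf.min_le hne (⟨_, ⟨h, hh, rfl⟩, rfl⟩ : φ (fun i => (h i).length) ∈ φ '' L)
  rw [← hmin] at this
  exact this

/-- An α-optimal labeled prefix code exists for every finite multiset of nonnegative
real weights. -/
theorem stmt_18 {d : ℕ} (hd : 2 ≤ d) (n : ℕ) (hn : 1 ≤ n) (a : Fin n → ℝ≥0) :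
    ∃ (C : Finset (List (Fin d))) (g : Fin n → List (Fin d))
      (r : List (Fin d) → ℝ≥0),
      IsPrefixCode (↑C : Set (List (Fin d))) ∧
      Function.Injective g ∧ C = Finset.image g Finset.univ ∧
      (∀ i, r (g i) = a i) ∧
      (∀ (D : Finset (List (Fin d))) (s : List (Fin d) → ℝ≥0)
          (f : List (Fin d) → List (Fin d)),
        IsPrefixCode (↑D : Set (List (Fin d))) →
        Set.InjOn f ↑C → D = C.image f → (∀ x ∈ C, r x = s (f x)) →
        ∑ x ∈ C, (x.length : ℝ≥0) * r x ≤ ∑ y ∈ D, (y.length : ℝ≥0) * s y) := by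
  obtain ⟨g, ⟨hinj, hpre⟩, hmin⟩ := exists_min_isCodeEnum hd n a
  have hr : ∀ i, Function.extend g a 0 (g i) = a i := fun i => hinj.extend_apply a 0 i
  refine ⟨Finset.image g Finset.univ, g, Function.extend g a 0, by simpa using hpre, hinj, rfl,
    hr, ?_⟩
  rintro D s f hD hf rfl hs
  have hmem : ∀ i, g i ∈ Finset.image g Finset.univ := fun i =>
    Finset.mem_image_of_mem g (Finset.mem_univ i)
  -- Both sums are reindexed by `Fin n`; the competitor is enumerated by `f ∘ g`.
  have hfg : IsCodeEnum (fun i => f (g i)) := by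
    refine ⟨fun i j hij => hinj (hf (hmem i) (hmem j) hij), ?_⟩
    convert hD using 1
    ext x
    simp
  rw [Finset.sum_image hf, Finset.sum_image hinj.injOn, Finset.sum_image hinj.injOn]
  simp only [← hs _ (hmem _), hr]
  exact hmin _ hfg
end
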